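/- For n = 2: every integrally convex function f : ℤ² → ℝ ∪ {+∞} whose effective domain is a discrete midpoint convex set is locally discrete midpoint convex. -/

import Mathlib

/-- The ℓ∞-norm of an integer vector, as a natural number. -/
def linf {n : ℕ} (z : Fin n → ℤ) : ℕ :=
  Finset.univ.sup fun i => (z i).natAbs

/-- Componentwise round-up of (x+y)/2. -/
def avgUp {n : ℕ} (x y : Fin n → ℤ) : Fin n → ℤ :=
  fun i => ⌈((x i + y i : ℚ)) / 2⌉

/-- Componentwise round-down of (x+y)/2. -/
def avgDown {n : ℕ} (x y : Fin n → ℤ) : Fin n → ℤ :=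
  fun i => ⌊((x i + y i : ℚ)) / 2⌋

/-- A set `S ⊆ ℤⁿ` is discrete midpoint convex. -/
def DMCSet {n : ℕ} (S : Set (Fin n → ℤ)) : Prop :=
  ∀ ⦃x⦄, x ∈ S → ∀ ⦃y⦄, y ∈ S → 2 ≤ linf (x - y) →
    avgUp x y ∈ S ∧ avgDown x y ∈ S

/-- `f` satisfies discrete midpoint convexity for the pair `(x, y)`.
Values are in `ℝ ∪ {+∞}`, modeled as `EReal` together with the hypothesis
that `f` never takes the value `⊥`. -/
def DMCPair {n : ℕ} (f : (Fin n → ℤ) → EReal) (x y : Fin n → ℤ) : Prop :=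
  f (avgUp x y) + f (avgDown x y) ≤ f x + f y

/-- `f` is globally discrete midpoint convex. -/
def GloballyDMC {n : ℕ} (f : (Fin n → ℤ) → EReal) : Prop :=
  ∀ x y : Fin n → ℤ, 2 ≤ linf (x - y) → DMCPair f x y

/-- The effective domain of `f`. -/
def effDom {n : ℕ} (f : (Fin n → ℤ) → EReal) : Set (Fin n → ℤ) :=
  {x | f x ≠ ⊤}

/-- `f` is locally discrete midpoint convex. -/
def LocallyDMC {n : ℕ} (f : (Fin n → ℤ) → EReal) : Prop :=
  DMCSet (effDom f) ∧ ∀ x y : Fin n → ℤ, linf (x - y) = 2 → DMCPair f x y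

/-- The integral neighborhood of a real point. -/
def intNbhd {n : ℕ} (x : Fin n → ℝ) : Set (Fin n → ℤ) :=
  {z | ∀ i, |x i - (z i : ℝ)| < 1}

/-- The local convex envelope `f̃` of `f`: at `x ∈ ℝⁿ`, the infimum of
`Σ_z λ_z f(z)` over convex combinations `x = Σ_z λ_z z` of points `z` of the
integral neighborhood `N(x)`. -/
noncomputable def envelope {n : ℕ} (f : (Fin n → ℤ) → EReal)
    (x : Fin n → ℝ) : EReal :=
  sInf { v : EReal | ∃ (t : Finset (Fin n → ℤ)) (lam : (Fin n → ℤ) → ℝ),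
    (∀ z ∈ t, z ∈ intNbhd x) ∧ (∀ z ∈ t, 0 ≤ lam z) ∧
    (∑ z ∈ t, lam z) = 1 ∧
    (∀ i, (∑ z ∈ t, lam z * (z i : ℝ)) = x i) ∧
    v = ∑ z ∈ t, ((lam z : EReal) * f z) }

/-- `f` is integrally convex: its local convex envelope is convex on `ℝⁿ`. -/
def IntegrallyConvexFn {n : ℕ} (f : (Fin n → ℤ) → EReal) : Prop :=
  ∀ (u v : Fin n → ℝ) (a b : ℝ), 0 ≤ a → 0 ≤ b → a + b = 1 →
    envelope f (a • u + b • v) ≤ (a : EReal) * envelope f u + (b : EReal) * envelope f v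

theorem avgDown_apply {n : ℕ} (x y : Fin n → ℤ) (i : Fin n) :
    avgDown x y i = (x i + y i) / 2 := by
  have h := Rat.floor_intCast_div_natCast (x i + y i) 2
  push_cast at h
  exact h

theorem avgUp_apply {n : ℕ} (x y : Fin n → ℤ) (i : Fin n) :
    avgUp x y i = -(-(x i + y i) / 2) := by
  have h := Rat.ceil_intCast_div_natCast (x i + y i) 2
  push_cast at h
  exact h

/-- The local convex envelope is bounded above by the function at integer points. -/
theorem envelope_intCast_le {n : ℕ} (f : (Fin n → ℤ) → EReal) (x : Fin n → ℤ) :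
    envelope f (fun i => (x i : ℝ)) ≤ f x := by
  refine sInf_le ⟨{x}, fun _ => 1, ?_, ?_, ?_, ?_, ?_⟩ <;> simp [intNbhd]

/-- If the integral neighborhood of the midpoint of `p` and `q` contains no other points,
then the envelope at the midpoint is at least the average of `f p` and `f q`. -/
theorem half_add_half_le_envelope {n : ℕ} (f : (Fin n → ℤ) → EReal) {m : Fin n → ℝ}
    {p q : Fin n → ℤ} (hm : ∀ i, m i = ((p i : ℝ) + q i) / 2)
    (hN : ∀ z ∈ intNbhd m, z = p ∨ z = q) :
    ((1 / 2 : ℝ) : EReal) * f p + ((1 / 2 : ℝ) : EReal) * f q ≤ envelope f m := by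
  refine le_sInf ?_
  rintro v ⟨t, lam, ht, -, hsum, hbar, rfl⟩
  have hsub : t ⊆ {p, q} := fun z hz => by simpa using hN z (ht z hz)
  rcases eq_or_ne p q with rfl | hpq
  · rw [← EReal.right_distrib_of_nonneg (by positivity) (by positivity), ← EReal.coe_add]
    have htp : t = {p} := by
      rcases Finset.subset_singleton_iff.1 (by simpa using hsub) with h | h
      · simp [h] at hsum
      · exact h
    subst htp
    simp only [Finset.sum_singleton] at hsum ⊢
    rw [hsum]
    norm_num
  · obtain ⟨j, hj⟩ := Function.ne_iff.1 hpq
    have hj' : (p j : ℝ) - q j ≠ 0 := sub_ne_zero.2 (by exact_mod_cast hj)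
    have extend : ∀ g : (Fin n → ℤ) → ℝ, ∑ z ∈ t, lam z * g z =
        (if p ∈ t then lam p else 0) * g p + (if q ∈ t then lam q else 0) * g q := by
      intro g
      rw [← Finset.sum_pair (f := fun z => (if z ∈ t then lam z else 0) * g z) hpq,
        ← Finset.sum_subset hsub (fun z _ hz => by simp [hz])]
      exact Finset.sum_congr rfl fun z hz => by simp [hz]
    have h1 := extend fun _ => 1
    have h2 := extend fun z => (z j : ℝ)
    simp only [mul_one, hsum] at h1
    rw [hbar j, hm j] at h2
    have hp : (if p ∈ t then lam p else 0) = 1 / 2 := by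
      apply mul_right_cancel₀ hj'
      linear_combination (q j : ℝ) * h1 - h2
    have hq : (if q ∈ t then lam q else 0) = 1 / 2 := by linarith
    have hpt : p ∈ t := by by_contra h; norm_num [h] at hp
    have hqt : q ∈ t := by by_contra h; norm_num [h] at hq
    rw [if_pos hpt] at hp
    rw [if_pos hqt] at hq
    have htpq : t = {p, q} := hsub.antisymm (by simp [Finset.insert_subset_iff, hpt, hqt])
    rw [htpq, Finset.sum_pair hpq, hp, hq]

/-- In dimension two, if `‖x - y‖∞ = 2` then the integral neighborhood of the midpoint of `x` and
`y` consists of the two rounded midpoints. -/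
theorem eq_avgUp_or_eq_avgDown_of_mem_intNbhd {x y z : Fin 2 → ℤ} (h : linf (x - y) = 2)
    (hz : z ∈ intNbhd fun i => ((x i : ℝ) + y i) / 2) : z = avgUp x y ∨ z = avgDown x y := by
  have hbound : ∀ i, -2 < x i + y i - 2 * z i ∧ x i + y i - 2 * z i < 2 := by
    intro i
    obtain ⟨h1, h2⟩ := abs_lt.1 (hz i)
    constructor
    · have : (-2 : ℝ) < x i + y i - 2 * z i := by linarith
      exact_mod_cast this
    · have : (x i + y i - 2 * z i : ℝ) < 2 := by linarith
      exact_mod_cast this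
  have hmax : max (x 0 - y 0).natAbs (x 1 - y 1).natAbs = 2 := by
    simpa [linf, Fin.univ_succ] using h
  have h0 := hbound 0
  have h1 := hbound 1
  simp only [funext_iff, Fin.forall_fin_two, avgUp_apply, avgDown_apply]
  omega

theorem avgUp_add_avgDown {n : ℕ} (x y : Fin n → ℤ) (i : Fin n) :
    avgUp x y i + avgDown x y i = x i + y i := by
  rw [avgUp_apply, avgDown_apply]
  omega

/-- For `n = 2`: every integrally convex function whose effective domain is a
discrete midpoint convex set is locally discrete midpoint convex. -/
theorem integrallyConvex_locallyDMC_dim2 (f : (Fin 2 → ℤ) → EReal)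
    (hf : ∀ x, f x ≠ ⊥) (hic : IntegrallyConvexFn f)
    (hdom : DMCSet (effDom f)) :
    LocallyDMC f := by
  refine ⟨hdom, fun x y hxy => ?_⟩
  set c : EReal := ((1 / 2 : ℝ) : EReal) with hc
  have hc0 : 0 ≤ c := by rw [hc]; positivity
  have hctop : c ≠ ⊤ := EReal.coe_ne_top _
  have hmid : c * f (avgUp x y) + c * f (avgDown x y) ≤
      envelope f fun i => ((x i : ℝ) + y i) / 2 :=
    half_add_half_le_envelope f
      (fun i => by rw [← Int.cast_add, ← Int.cast_add, avgUp_add_avgDown])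
      fun z hz => eq_avgUp_or_eq_avgDown_of_mem_intNbhd hxy hz
  have hconv := hic (fun i => (x i : ℝ)) (fun i => (y i : ℝ)) (1 / 2) (1 / 2)
    (by norm_num) (by norm_num) (by norm_num)
  have hpt : ((1 / 2 : ℝ) • (fun i => (x i : ℝ)) + (1 / 2 : ℝ) • fun i => (y i : ℝ)) =
      fun i : Fin 2 => ((x i : ℝ) + y i) / 2 := by
    ext i
    simp only [Pi.add_apply, Pi.smul_apply, smul_eq_mul]
    ring
  rw [hpt] at hconv
  have hle : c * (f (avgUp x y) + f (avgDown x y)) ≤ c * (f x + f y) := by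
    rw [EReal.left_distrib_of_nonneg_of_ne_top hc0 hctop,
      EReal.left_distrib_of_nonneg_of_ne_top hc0 hctop]
    exact hmid.trans <| hconv.trans <| add_le_add
      (mul_le_mul_of_nonneg_left (envelope_intCast_le f x) hc0)
      (mul_le_mul_of_nonneg_left (envelope_intCast_le f y) hc0)
  have htwo : ((2 : ℝ) : EReal) * c = 1 := by rw [hc, ← EReal.coe_mul]; norm_num
  have := mul_le_mul_of_nonneg_left hle (show (0 : EReal) ≤ ((2 : ℝ) : EReal) by positivity)
  rwa [← mul_assoc, ← mul_assoc, htwo, one_mul, one_mul] at this
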